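/- Let r > 0 and let v be a harmonic field on an open neighborhood of the closed ball B̄_r ⊆ ℝ³. Then ∫_{B_r} |v|² dx ≤ r·∫_{∂B_r} |v|² dσ. -/

import Mathlib

open MeasureTheory Metric
open scoped RealInnerProductSpace

noncomputable section

abbrev E3 := EuclideanSpace ℝ (Fin 3)

/-- A harmonic field on an open set `Ω ⊆ ℝ³`: a smooth map whose total derivative is at
every point of `Ω` a symmetric, trace-free endomorphism of `ℝ³`. -/
def IsHarmonicField (Ω : Set E3) (v : E3 → E3) : Prop :=
  ContDiffOn ℝ (⊤ : ℕ∞) v Ω ∧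
    ∀ x ∈ Ω,
      (∀ u w : E3, ⟪fderiv ℝ v x u, w⟫ = ⟪fderiv ℝ v x w, u⟫) ∧
      LinearMap.trace ℝ E3 (fderiv ℝ v x).toLinearMap = 0

/-!
A harmonic field is harmonic: `D²v` is a symmetric bilinear map and each `D²v(u, ·)` is symmetric
and trace-free, so `⟪Δv, u⟫ = ∑ ⟪D²v(eᵢ, eᵢ), u⟫ = ∑ ⟪D²v(u, eᵢ), eᵢ⟫ = 0`. Hence `f = ‖v‖²` is
subharmonic.

In dimension `d`, the divergence of `x ↦ f x • x` is `d f + Df(x) x`, so polar coordinates give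
`d ∫_B f + ∫_B Df(x) x = r ∫_∂B f`. Integrating by parts against `(r² - ‖x‖²) / 2`, which has
gradient `-x` and vanishes on `∂B`, turns `∫_B Df(x) x` into `∫_B Δf (r² - ‖x‖²) / 2 ≥ 0`. So the
inequality holds with the better constant `r / d`.

The surface measure of polar coordinates is the normalized Hausdorff measure `μHE`, because central
projections to tangent hyperplanes are locally almost isometric, and because cones over pieces of
hyperplanes have the expected volume. Finally `μHE ≤ μH`, as the sup norm is at most the Euclidean
norm.
-/

open Module Set Filter Topology InnerProductSpace Laplacian
open scoped Pointwise NNReal ENNReal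

section SurfaceMeasure

theorem measure_le_of_forall_exists_mem_nhds {X : Type*} [TopologicalSpace X]
    [SecondCountableTopology X] [MeasurableSpace X] [OpensMeasurableSpace X] {μ ν : Measure X}
    (h : ∀ x, ∃ U ∈ 𝓝 x, ∀ s ⊆ U, MeasurableSet s → μ s ≤ ν s) : μ ≤ ν := by
  choose U hU hUs using h
  obtain ⟨t, ht, htU⟩ := TopologicalSpace.countable_cover_nhds fun x ↦ interior_mem_nhds.2 (hU x)
  refine Measure.le_intro fun s hs ⟨y, _⟩ ↦ ?_
  obtain ⟨x, hxt, -⟩ := mem_iUnion₂.1 (htU ▸ mem_univ y)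
  obtain ⟨f, rfl⟩ := ht.exists_eq_range ⟨x, hxt⟩
  rw [biUnion_range] at htU
  set V := disjointed fun n ↦ interior (U (f n)) with hV
  have hVm n : MeasurableSet (V n) := .disjointed (fun n ↦ isOpen_interior.measurableSet) n
  have hsV : s = ⋃ n, s ∩ V n := by rw [← inter_iUnion, hV, iUnion_disjointed, htU, inter_univ]
  have hdisj : Pairwise (Function.onFun Disjoint fun n ↦ s ∩ V n) :=
    (disjoint_disjointed _).mono fun i j h ↦ h.mono inter_subset_right inter_subset_right
  have hsum (ρ : Measure X) : ρ s = ∑' n, ρ (s ∩ V n) := by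
    conv_lhs => rw [hsV]
    exact measure_iUnion hdisj fun n ↦ hs.inter (hVm n)
  rw [hsum μ, hsum ν]
  exact ENNReal.tsum_le_tsum fun n ↦ hUs (f n) _
    (inter_subset_right.trans <| (disjointed_subset _ n).trans interior_subset)
    (hs.inter (hVm n))

theorem ennreal_le_of_forall_one_lt_le_pow_mul {a b : ℝ≥0∞} (m : ℕ)
    (h : ∀ K : ℝ≥0, 1 < K → a ≤ K ^ m * b) : a ≤ b := by
  have hlim : Tendsto (fun K : ℝ≥0 ↦ (K : ℝ≥0∞) ^ m * b) (𝓝[>] 1) (𝓝 b) := by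
    have hpow : Continuous fun K : ℝ≥0 ↦ (K : ℝ≥0∞) ^ m :=
      (ENNReal.continuous_pow m).comp ENNReal.continuous_coe
    simpa using ENNReal.Tendsto.mul_const (b := b)
      ((hpow.tendsto 1).mono_left nhdsWithin_le_nhds) (by simp)
  exact ge_of_tendsto hlim (eventually_mem_nhdsWithin.mono h)

theorem euclideanHausdorffMeasure_image_le {X Y : Type*} [MetricSpace X] [MetricSpace Y]
    [MeasurableSpace X] [BorelSpace X] [MeasurableSpace Y] [BorelSpace Y] {K : ℝ≥0} {f : X → Y}
    {s : Set X} (hf : LipschitzOnWith K f s) (d : ℕ) : μHE[d] (f '' s) ≤ K ^ d * μHE[d] s := by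
  simp only [Measure.euclideanHausdorffMeasure_def, Measure.smul_apply, ENNReal.smul_def,
    smul_eq_mul]
  rw [mul_left_comm]
  gcongr
  simpa using hf.hausdorffMeasure_image_le d.cast_nonneg

theorem lintegral_Ioo_zero_one_pow (n : ℕ) :
    ∫⁻ t in Ioo (0 : ℝ) 1, ENNReal.ofReal (t ^ n) = ENNReal.ofReal (n + 1)⁻¹ := by
  rw [← ofReal_integral_eq_lintegral_ofReal, ← integral_Ioc_eq_integral_Ioo,
    ← intervalIntegral.integral_of_le zero_le_one, integral_pow]
  · simp
  · exact (intervalIntegrable_iff_integrableOn_Ioo_of_le zero_le_one).1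
      (intervalIntegral.intervalIntegrable_pow n)
  · filter_upwards [ae_restrict_mem measurableSet_Ioo] with t ht using pow_nonneg ht.1.le n

variable {E : Type*} [NormedAddCommGroup E] [InnerProductSpace ℝ E]

/-- The central (gnomonic) projection of `x` onto the affine hyperplane `{y | ⟪e, y⟫ = 1}`, which
is tangent to the unit sphere at `e` when `‖e‖ = 1`. Its value is `0` on the hyperplane
`{x | ⟪e, x⟫ = 0}`, where the projection is undefined. -/
def gnomonic (e x : E) : E := (⟪e, x⟫)⁻¹ • x

variable {e x : E} {s : Set E} {K : ℝ≥0}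

theorem inner_gnomonic (h : ⟪e, x⟫ ≠ 0) : ⟪e, gnomonic e x⟫ = 1 := by
  simp [gnomonic, inner_smul_right, h]

theorem inner_smul_gnomonic (h : ⟪e, x⟫ ≠ 0) : ⟪e, x⟫ • gnomonic e x = x := by
  simp [gnomonic, smul_smul, h]

theorem inv_norm_smul_gnomonic (hx : ‖x‖ = 1) (h : 0 < ⟪e, x⟫) :
    ‖gnomonic e x‖⁻¹ • gnomonic e x = x := by
  rw [gnomonic, norm_smul, hx, mul_one, norm_inv, inv_inv, Real.norm_of_nonneg h.le,
    smul_inv_smul₀ h.ne']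

theorem gnomonic_image_eq (hs : s ⊆ sphere 0 1) (hpos : ∀ x ∈ s, 0 < ⟪e, x⟫) :
    gnomonic e '' s = {y | ⟪e, y⟫ = 1 ∧ ‖y‖⁻¹ • y ∈ s} := by
  ext y
  constructor
  · rintro ⟨x, hx, rfl⟩
    refine ⟨inner_gnomonic (hpos x hx).ne', ?_⟩
    rwa [inv_norm_smul_gnomonic (mem_sphere_zero_iff_norm.1 (hs hx)) (hpos x hx)]
  · rintro ⟨hy, hys⟩
    have hy0 : ‖y‖ ≠ 0 := fun h ↦ by simp [norm_eq_zero.1 h] at hy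
    exact ⟨_, hys, by simp [gnomonic, inner_smul_right, hy, smul_smul, hy0]⟩

theorem measurable_gnomonic [MeasurableSpace E] [BorelSpace E] [SecondCountableTopology E]
    (e : E) : Measurable (gnomonic e) :=
  (measurable_const.inner measurable_id).inv.smul measurable_id

theorem Ioo_zero_one_smul_eq (hs : ∀ x ∈ s, ⟪e, x⟫ = 1) :
    Ioo (0 : ℝ) 1 • s = {x | ⟪e, x⟫ ∈ Ioo (0 : ℝ) 1 ∧ gnomonic e x ∈ s} := by
  ext x
  constructor
  · rintro ⟨t, ht, a, ha, rfl⟩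
    have := ht.1.ne'
    simpa [gnomonic, inner_smul_right, hs a ha, smul_smul, this] using ⟨ht, ha⟩
  · rintro ⟨ht, ha⟩
    exact ⟨_, ht, _, ha, inner_smul_gnomonic ht.1.ne'⟩

theorem mem_mk'_orthogonal_singleton_iff (he : ‖e‖ = 1) (t : ℝ) :
    x ∈ AffineSubspace.mk' (t • e +ᵥ (0 : E)) (ℝ ∙ e)ᗮ ↔ ⟪e, x⟫ = t := by
  rw [AffineSubspace.mem_mk', Submodule.mem_orthogonal_singleton_iff_inner_right]
  simp [inner_sub_right, inner_smul_right, he, sub_eq_zero]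

theorem Ioo_zero_one_smul_inter_mk' (he : ‖e‖ = 1) (hs : ∀ x ∈ s, ⟪e, x⟫ = 1) (t : ℝ) :
    (Ioo (0 : ℝ) 1 • s) ∩ AffineSubspace.mk' (t • e +ᵥ (0 : E)) (ℝ ∙ e)ᗮ =
      {x | t ∈ Ioo (0 : ℝ) 1 ∧ x ∈ t • s} := by
  ext x
  simp only [Ioo_zero_one_smul_eq hs, mem_inter_iff, mem_ofPred_eq, SetLike.mem_coe,
    mem_mk'_orthogonal_singleton_iff he, gnomonic]
  constructor
  · rintro ⟨⟨ht, hx⟩, rfl⟩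
    exact ⟨ht, (mem_smul_set_iff_inv_smul_mem₀ ht.1.ne' _ _).2 hx⟩
  · rintro ⟨ht, y, hy, rfl⟩
    simpa [inner_smul_right, hs y hy, smul_smul, ht.1.ne'] using ⟨ht, hy⟩

theorem exists_lipschitzOnWith_inv_smul {φ : E → ℝ} (hφ : HasStrictFDerivAt φ (innerSL ℝ e) e)
    (hφe : φ e = 1) (he : ‖e‖ = 1) (hK : 1 < K) :
    ∃ U ∈ 𝓝 e, LipschitzOnWith K (fun x ↦ (φ x)⁻¹ • x) U := by
  have hderiv : HasStrictFDerivAt (fun x ↦ (φ x)⁻¹ • x) (ℝ ∙ e)ᗮ.starProjection e := by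
    have hinv := (hasStrictDerivAt_inv (x := φ e) (by simp [hφe])).comp_hasStrictFDerivAt e hφ
    refine (hinv.smul (hasStrictFDerivAt_id e)).congr_fderiv ?_
    ext x
    simp [hφe, Submodule.starProjection_orthogonal, Submodule.starProjection_unit_singleton ℝ he,
      sub_eq_add_neg]
  have hnorm : ‖(ℝ ∙ e)ᗮ.starProjection‖₊ ≤ 1 := Submodule.starProjection_norm_le (ℝ ∙ e)ᗮ
  exact hderiv.exists_lipschitzOnWith_of_nnnorm_lt K (hnorm.trans_lt hK)

-- The unit sphere and its tangent hyperplane at `e` are almost isometric near `e`.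
theorem exists_lipschitzOnWith_gnomonic (he : ‖e‖ = 1) (hK : 1 < K) :
    ∃ U ∈ 𝓝 e, LipschitzOnWith K (gnomonic e) U ∧
      LipschitzOnWith K (fun x ↦ ‖x‖⁻¹ • x) (gnomonic e '' U) ∧
      ∀ x ∈ U, (K : ℝ)⁻¹ < ⟪e, x⟫ := by
  have hee : innerSL ℝ e e = 1 := by simp [he]
  have hnorm : HasStrictFDerivAt (fun x : E ↦ ‖x‖) (innerSL ℝ e) e := by
    have := (hasStrictFDerivAt_norm_sq e).sqrt (by simp [he])
    refine (by simpa using this : HasStrictFDerivAt _ _ e).congr_fderiv ?_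
    ext; simp [he]
  obtain ⟨U, hU, hUK⟩ := exists_lipschitzOnWith_inv_smul (innerSL ℝ e).hasStrictFDerivAt hee he hK
  obtain ⟨V, hV, hVK⟩ := exists_lipschitzOnWith_inv_smul hnorm he he hK
  have hgnomonic : Tendsto (gnomonic e) (𝓝 e) (𝓝 e) := by
    have : ContinuousAt (gnomonic e) e := by unfold gnomonic; fun_prop (disch := simp [he])
    simpa [ContinuousAt, gnomonic, he] using this
  have hinner : ∀ᶠ x in 𝓝 e, (K : ℝ)⁻¹ < innerSL ℝ e x :=
    (innerSL ℝ e).continuous.continuousAt.eventually_const_lt (hee ▸ inv_lt_one_of_one_lt₀ hK)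
  refine ⟨U ∩ gnomonic e ⁻¹' V ∩ {x | (K : ℝ)⁻¹ < innerSL ℝ e x},
    inter_mem (inter_mem hU (hgnomonic hV)) hinner,
    hUK.mono fun x hx ↦ hx.1.1, hVK.mono ?_, fun x hx ↦ hx.2⟩
  rintro - ⟨x, hx, rfl⟩
  exact hx.1.2

theorem Ioo_smul_subset_Ioo_smul_gnomonic_image (he : ‖e‖ = 1) (hs : s ⊆ sphere 0 1)
    (hpos : ∀ x ∈ s, 0 < ⟪e, x⟫) : Ioo (0 : ℝ) 1 • s ⊆ Ioo (0 : ℝ) 1 • gnomonic e '' s := by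
  rintro - ⟨t, ht, x, hx, rfl⟩
  have hle : ⟪e, x⟫ ≤ 1 := by
    simpa [he, mem_sphere_zero_iff_norm.1 (hs hx)] using real_inner_le_norm e x
  refine ⟨t * ⟪e, x⟫, ⟨mul_pos ht.1 (hpos x hx), ?_⟩, _, mem_image_of_mem _ hx, ?_⟩
  · exact mul_lt_one_of_nonneg_of_lt_one_left ht.1.le ht.2 hle
  · simp only [mul_smul, inner_smul_gnomonic (hpos x hx).ne']

theorem Ioo_smul_gnomonic_image_subset (hK : 0 < K) (hs : ∀ x ∈ s, (K : ℝ)⁻¹ < ⟪e, x⟫) :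
    Ioo (0 : ℝ) 1 • gnomonic e '' s ⊆ (K : ℝ) • Ioo (0 : ℝ) 1 • s := by
  rintro - ⟨t, ht, -, ⟨x, hx, rfl⟩, rfl⟩
  have hpos : 0 < ⟪e, x⟫ := (inv_pos.2 (NNReal.coe_pos.2 hK)).trans (hs x hx)
  refine ⟨_, ⟨t * ((K : ℝ) * ⟪e, x⟫)⁻¹, ⟨?_, ?_⟩, x, hx, rfl⟩, ?_⟩
  · exact mul_pos ht.1 (inv_pos.2 (mul_pos hK hpos))
  · refine mul_lt_one_of_nonneg_of_lt_one_left ht.1.le ht.2 (inv_le_one_of_one_le₀ ?_)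
    exact ((inv_lt_iff_one_lt_mul₀' (NNReal.coe_pos.2 hK)).1 (hs x hx)).le
  · simp only [gnomonic, smul_smul]
    congr 1
    field_simp

variable [MeasurableSpace E] [BorelSpace E]

theorem euclideanHausdorffMeasure_Ioo_zero_one_smul_inter_mk' (he : ‖e‖ = 1)
    (hs : ∀ x ∈ s, ⟪e, x⟫ = 1) (d : ℕ) (t : ℝ) :
    μHE[d] ((Ioo (0 : ℝ) 1 • s) ∩ AffineSubspace.mk' (t • e +ᵥ (0 : E)) (ℝ ∙ e)ᗮ) =
      (Ioo 0 1).indicator (fun t ↦ ENNReal.ofReal (t ^ d) * μHE[d] s) t := by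
  rw [Ioo_zero_one_smul_inter_mk' he hs]
  by_cases ht : t ∈ Ioo 0 1
  · simp only [ht, true_and, ofPred_mem_eq, indicator_of_mem]
    rw [Measure.euclideanHausdorffMeasure_smul₀ _ ht.1.ne', ENNReal.ofReal_pow ht.1.le,
      ← Real.enorm_of_nonneg ht.1.le, ENNReal.smul_def, smul_eq_mul, ENNReal.coe_pow,
      enorm_eq_nnnorm]
  · simp [ht]

variable [FiniteDimensional ℝ E]

theorem finrank_mul_volume_Ioo_smul (he : ‖e‖ = 1) (hsm : MeasurableSet s)
    (hs : ∀ x ∈ s, ⟪e, x⟫ = 1) :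
    finrank ℝ E * volume (Ioo (0 : ℝ) 1 • s) = μHE[finrank ℝ E - 1] s := by
  have he0 : e ≠ 0 := fun h ↦ by simp [h] at he
  have : Nontrivial E := nontrivial_of_ne e 0 he0
  have hn : ((finrank ℝ E - 1 : ℕ) : ℝ) + 1 = finrank ℝ E := by
    exact_mod_cast Nat.sub_add_cancel (finrank_pos (R := ℝ) (M := E))
  have hmeas : MeasurableSet (Ioo (0 : ℝ) 1 • s) := by
    rw [Ioo_zero_one_smul_eq hs]
    exact ((measurable_const.inner measurable_id) measurableSet_Ioo).inter
      (measurable_gnomonic e hsm)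
  rw [← InnerProductSpace.euclideanHausdorffMeasure_eq_volume,
    EuclideanGeometry.euclideanHausdorffMeasure_eq_lintegral 0 he0 hmeas,
    lintegral_congr (euclideanHausdorffMeasure_Ioo_zero_one_smul_inter_mk' he hs _),
    lintegral_indicator measurableSet_Ioo, lintegral_mul_const _ (by fun_prop),
    lintegral_Ioo_zero_one_pow, hn, ENNReal.ofReal_inv_of_pos (by simp [finrank_pos]),
    ENNReal.ofReal_natCast, ← ofReal_norm, he, ENNReal.ofReal_one, one_mul, ← mul_assoc,
    ENNReal.mul_inv_cancel (by simp [finrank_pos.ne']) (by simp), one_mul]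

theorem finrank_mul_volume_Ioo_smul_gnomonic_image (he : ‖e‖ = 1) (hsm : MeasurableSet s)
    (hs : s ⊆ sphere 0 1) (hpos : ∀ x ∈ s, 0 < ⟪e, x⟫) :
    finrank ℝ E * volume (Ioo (0 : ℝ) 1 • gnomonic e '' s) =
      μHE[finrank ℝ E - 1] (gnomonic e '' s) := by
  refine finrank_mul_volume_Ioo_smul he ?_ ?_ <;> rw [gnomonic_image_eq hs hpos]
  · exact ((measurable_const.inner measurable_id) (measurableSet_singleton 1)).inter
      ((measurable_norm.inv.smul measurable_id) hsm)
  · exact fun y hy ↦ hy.1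

theorem exists_mem_nhds_forall_subset_sphere_volume_cone (he : ‖e‖ = 1) (hK : 1 < K) :
    ∃ U ∈ 𝓝 e, ∀ s ⊆ U, s ⊆ sphere 0 1 → MeasurableSet s →
      finrank ℝ E * volume (Ioo (0 : ℝ) 1 • s) ≤ K ^ (finrank ℝ E - 1) * μHE[finrank ℝ E - 1] s ∧
      μHE[finrank ℝ E - 1] s ≤
        K ^ (finrank ℝ E - 1 + finrank ℝ E) * (finrank ℝ E * volume (Ioo (0 : ℝ) 1 • s)) := by
  obtain ⟨U, hU, hgnomonic, hnormalize, hUK⟩ := exists_lipschitzOnWith_gnomonic he hK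
  refine ⟨U, hU, fun s hsU hs hsm ↦ ?_⟩
  have hK0 : 0 < K := zero_lt_one.trans hK
  have hpos x (hx : x ∈ s) : 0 < ⟪e, x⟫ :=
    (inv_pos.2 (NNReal.coe_pos.2 hK0)).trans (hUK x (hsU hx))
  have hcone := finrank_mul_volume_Ioo_smul_gnomonic_image he hsm hs hpos
  constructor
  · calc finrank ℝ E * volume (Ioo (0 : ℝ) 1 • s)
      _ ≤ finrank ℝ E * volume (Ioo (0 : ℝ) 1 • gnomonic e '' s) := by
        gcongr finrank ℝ E * volume ?_
        exact Ioo_smul_subset_Ioo_smul_gnomonic_image he hs hpos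
      _ = μHE[finrank ℝ E - 1] (gnomonic e '' s) := hcone
      _ ≤ _ := euclideanHausdorffMeasure_image_le (hgnomonic.mono hsU) _
  · calc μHE[finrank ℝ E - 1] s
      _ = μHE[finrank ℝ E - 1] ((fun x ↦ ‖x‖⁻¹ • x) '' (gnomonic e '' s)) := by
        rw [image_image, image_congr fun x hx ↦
          inv_norm_smul_gnomonic (mem_sphere_zero_iff_norm.1 (hs hx)) (hpos x hx), image_id']
      _ ≤ K ^ (finrank ℝ E - 1) * μHE[finrank ℝ E - 1] (gnomonic e '' s) :=
        euclideanHausdorffMeasure_image_le (hnormalize.mono (image_mono hsU)) _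
      _ = K ^ (finrank ℝ E - 1) *
          (finrank ℝ E * volume (Ioo (0 : ℝ) 1 • gnomonic e '' s)) := by rw [hcone]
      _ ≤ K ^ (finrank ℝ E - 1) *
          (finrank ℝ E * volume ((K : ℝ) • Ioo (0 : ℝ) 1 • s)) := by
        gcongr
        exact Ioo_smul_gnomonic_image_subset hK0 fun x hx ↦ hUK x (hsU hx)
      _ = _ := by
        rw [Measure.addHaar_smul_of_nonneg _ K.coe_nonneg, pow_add,
          ENNReal.ofReal_pow K.coe_nonneg, ENNReal.ofReal_coe_nnreal]
        ring

theorem toSphere_eq_euclideanHausdorffMeasure :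
    (volume : Measure E).toSphere = μHE[finrank ℝ E - 1] := by
  have hcompare {K : ℝ≥0} (hK : 1 < K) :
      (volume : Measure E).toSphere ≤ (K : ℝ≥0∞) ^ (finrank ℝ E - 1) • μHE[finrank ℝ E - 1] ∧
      μHE[finrank ℝ E - 1] ≤
        (K : ℝ≥0∞) ^ (finrank ℝ E - 1 + finrank ℝ E) • (volume : Measure E).toSphere := by
    choose U hU hUs using fun ω : sphere (0 : E) 1 ↦
      exists_mem_nhds_forall_subset_sphere_volume_cone (norm_eq_of_mem_sphere ω) hK
    have hlocal (ω : sphere (0 : E) 1) (s : Set (sphere (0 : E) 1)) (hsU : s ⊆ (↑) ⁻¹' U ω)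
        (hs : MeasurableSet s) := hUs ω ((↑) '' s) (image_subset_iff.2 hsU)
      (Subtype.coe_image_subset _ _) (isClosed_sphere.measurableSet.subtype_image hs)
    have hval : Isometry ((↑) : sphere (0 : E) 1 → E) := isometry_subtype_coe
    simp_rw [hval.euclideanHausdorffMeasure_image] at hlocal
    have hnhds (ω : sphere (0 : E) 1) : Subtype.val ⁻¹' U ω ∈ 𝓝 ω :=
      continuous_subtype_val.continuousAt.preimage_mem_nhds (hU ω)
    constructor <;>
    refine measure_le_of_forall_exists_mem_nhds fun ω ↦ ⟨_, hnhds ω, fun s hsU hs ↦ ?_⟩ <;>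
    rw [Measure.smul_apply, smul_eq_mul, Measure.toSphere_apply' _ hs]
    exacts [(hlocal ω s hsU hs).1, (hlocal ω s hsU hs).2]
  exact le_antisymm
    (Measure.le_iff.2 fun s _ ↦ ennreal_le_of_forall_one_lt_le_pow_mul (finrank ℝ E - 1)
      fun K hK ↦ (hcompare hK).1 s)
    (Measure.le_iff.2 fun s _ ↦ ennreal_le_of_forall_one_lt_le_pow_mul
      (finrank ℝ E - 1 + finrank ℝ E) fun K hK ↦ (hcompare hK).2 s)

end SurfaceMeasure

section SphereIntegral

variable {E : Type*} [NormedAddCommGroup E] [InnerProductSpace ℝ E] [FiniteDimensional ℝ E]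
  [MeasurableSpace E] [BorelSpace E] {r : ℝ}

theorem map_smul_toSphere (hr : 0 < r) :
    ENNReal.ofReal r ^ (finrank ℝ E - 1) •
      (volume : Measure E).toSphere.map (fun ω : sphere (0 : E) 1 ↦ r • (ω : E)) =
      μHE[finrank ℝ E - 1].restrict (sphere 0 r) := by
  ext s hs
  have himage : r • ((↑) '' ((fun ω : sphere (0 : E) 1 ↦ r • (ω : E)) ⁻¹' s) : Set E) =
      s ∩ sphere 0 r := by
    ext x
    simp only [mem_smul_set, mem_image, mem_preimage, Subtype.exists, mem_inter_iff,
      mem_sphere_zero_iff_norm, exists_and_right, exists_eq_right]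
    constructor
    · rintro ⟨y, ⟨hy, hys⟩, rfl⟩
      exact ⟨hys, by rw [norm_smul, hy, mul_one, Real.norm_of_nonneg hr.le]⟩
    · rintro ⟨hxs, hx⟩
      have hrx : r • r⁻¹ • x = x := smul_inv_smul₀ hr.ne' x
      exact ⟨r⁻¹ • x, ⟨by rw [norm_smul, hx, norm_inv, Real.norm_of_nonneg hr.le,
        inv_mul_cancel₀ hr.ne'], by rwa [hrx]⟩, hrx⟩
  rw [Measure.restrict_apply hs, ← himage, Measure.euclideanHausdorffMeasure_smul₀ _ hr.ne',
    isometry_subtype_coe.euclideanHausdorffMeasure_image, Measure.smul_apply,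
    Measure.map_apply (by fun_prop) hs, toSphere_eq_euclideanHausdorffMeasure]
  simp [ENNReal.smul_def, ← Real.enorm_eq_ofReal hr.le, enorm]

theorem setIntegral_sphere_eq_toSphere {G : Type*} [NormedAddCommGroup G] [NormedSpace ℝ G]
    (hr : 0 < r) (f : E → G) :
    ∫ x in sphere 0 r, f x ∂μHE[finrank ℝ E - 1] =
      r ^ (finrank ℝ E - 1) • ∫ ω, f (r • ω) ∂(volume : Measure E).toSphere := by
  have hemb : MeasurableEmbedding fun ω : sphere (0 : E) 1 ↦ r • (ω : E) :=
    (measurableEmbedding_const_smul₀ hr.ne').comp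
      (.subtype_coe isClosed_sphere.measurableSet)
  rw [← map_smul_toSphere hr, integral_smul_measure, hemb.integral_map, ENNReal.toReal_pow,
    ENNReal.toReal_ofReal hr.le]

end SphereIntegral

section HausdorffComparison

variable {d : ℕ}

theorem volume_euclideanSpace_le_hausdorffMeasure :
    (volume : Measure (EuclideanSpace ℝ (Fin d))) ≤ μH[d] := by
  refine Measure.le_iff.2 fun s hs ↦ ?_
  calc volume s
    _ = μH[d] (WithLp.toLp 2 ⁻¹' s : Set (Fin d → ℝ)) := by
      rw [← (PiLp.volume_preserving_toLp (Fin d)).measure_preimage hs.nullMeasurableSet,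
        ← hausdorffMeasure_pi_real, Fintype.card_fin]
    _ = μH[d] (WithLp.ofLp '' s : Set (Fin d → ℝ)) := by
      congr 1
      exact ((WithLp.equiv 2 (Fin d → ℝ)).image_eq_preimage_symm s).symm
    _ ≤ μH[d] s := by
      have hlip : LipschitzWith 1 (WithLp.ofLp : EuclideanSpace ℝ (Fin d) → Fin d → ℝ) :=
        PiLp.lipschitzWith_ofLp 2 _
      simpa using hlip.hausdorffMeasure_image_le d.cast_nonneg s

theorem addHaarScalarFactor_volume_hausdorffMeasure_le_one :
    Measure.addHaarScalarFactor (volume : Measure (EuclideanSpace ℝ (Fin d))) μH[d] ≤ 1 := by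
  set c := Measure.addHaarScalarFactor (volume : Measure (EuclideanSpace ℝ (Fin d))) μH[d]
  set B := ball (0 : EuclideanSpace ℝ (Fin d)) 1
  have hle : (c : ℝ≥0∞) * μH[d] B ≤ 1 * μH[d] B := by
    rw [one_mul, ← smul_eq_mul, ← ENNReal.smul_def, ← Measure.smul_apply,
      ← Measure.euclideanHausdorffMeasure_def, EuclideanSpace.euclideanHausdorffMeasure_eq_volume]
    exact volume_euclideanSpace_le_hausdorffMeasure B
  exact_mod_cast (ENNReal.mul_le_mul_iff_left (measure_ball_pos _ _ one_pos).ne'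
    measure_ball_lt_top.ne).1 hle

theorem setIntegral_euclideanHausdorffMeasure_le {X : Type*} [EMetricSpace X]
    [MeasurableSpace X] [BorelSpace X] {f : X → ℝ} (hf : 0 ≤ f) (s : Set X) :
    ∫ x in s, f x ∂μHE[d] ≤ ∫ x in s, f x ∂μH[d] := by
  rw [Measure.euclideanHausdorffMeasure_def, Measure.restrict_smul, integral_smul_nnreal_measure]
  exact mul_le_of_le_one_left (integral_nonneg hf)
    (NNReal.coe_le_one.2 addHaarScalarFactor_volume_hausdorffMeasure_le_one)

end HausdorffComparison

theorem integrableOn_ball_of_continuous {X G : Type*} [PseudoMetricSpace X] [ProperSpace X]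
    [MeasurableSpace X] [OpensMeasurableSpace X] {μ : Measure X} [IsLocallyFiniteMeasure μ]
    [NormedAddCommGroup G] {g : X → G} (hg : Continuous g) (x : X) (r : ℝ) :
    IntegrableOn g (ball x r) μ :=
  (hg.locallyIntegrable.integrableOn_isCompact (isCompact_closedBall x r)).mono_set
    ball_subset_closedBall

section PolarCoordinates

variable {E G : Type*} [NormedAddCommGroup E] [NormedSpace ℝ E]
  [NormedAddCommGroup G] [NormedSpace ℝ G]

theorem hasDerivAt_pow_smul_comp_smul {F : E → G} {ω : E} {t : ℝ}
    (hF : DifferentiableAt ℝ F (t • ω)) {n : ℕ} (hn : n ≠ 0) :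
    HasDerivAt (fun t : ℝ ↦ t ^ n • F (t • ω))
      (t ^ (n - 1) • ((n : ℝ) • F (t • ω) + fderiv ℝ F (t • ω) (t • ω))) t := by
  have hFω : HasDerivAt (fun t : ℝ ↦ F (t • ω)) (fderiv ℝ F (t • ω) ω) t := by
    simpa [Function.comp_def] using
      hF.hasFDerivAt.comp_hasDerivAt t ((hasDerivAt_id t).smul_const ω)
  refine ((hasDerivAt_pow n t).smul hFω).congr_deriv ?_
  rw [map_smul, smul_add, smul_smul, smul_smul, pow_sub_one_mul hn, mul_comm, add_comm]

variable [FiniteDimensional ℝ E] [MeasurableSpace E] [BorelSpace E] {μ : Measure E}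
  [μ.IsAddHaarMeasure] {r : ℝ}

theorem integral_volumeIoiPow (n : ℕ) (f : ℝ → G) :
    ∫ t : Ioi (0 : ℝ), f t ∂.volumeIoiPow n = ∫ t in Ioi 0, t ^ n • f t := by
  simp only [Measure.volumeIoiPow, ENNReal.ofReal]
  rw [integral_withDensity_eq_integral_smul
      (measurable_subtype_coe.pow_const n).real_toNNReal,
    integral_subtype_comap measurableSet_Ioi fun t ↦ Real.toNNReal (t ^ n) • f t]
  refine setIntegral_congr_fun measurableSet_Ioi fun t ht ↦ ?_
  simp only [NNReal.smul_def, Real.coe_toNNReal _ (pow_nonneg (mem_Ioi.1 ht).le n)]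

theorem integral_eq_integral_toSphere_integral_Ioi [Nontrivial E] {g : E → G}
    (hg : Integrable g μ) :
    ∫ x, g x ∂μ =
      ∫ ω : sphere (0 : E) 1,
        (∫ t in Ioi (0 : ℝ), t ^ (finrank ℝ E - 1) • g (t • (ω : E))) ∂μ.toSphere := by
  set polar := homeomorphUnitSphereProd E
  have hpolar := μ.measurePreserving_homeomorphUnitSphereProd
  have hemb : MeasurableEmbedding polar := polar.measurableEmbedding
  set f : sphere (0 : E) 1 × Ioi (0 : ℝ) → G := fun p ↦ g (p.2.1 • (p.1 : E))
  have hf (x : ({0}ᶜ : Set E)) : f (polar x) = g x := by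
    simp [f, polar, smul_smul, mul_inv_cancel₀ (norm_ne_zero_iff.2 x.2)]
  have hm : MeasurableSet ({0}ᶜ : Set E) := (measurableSet_singleton 0).compl
  have hint : Integrable f (μ.toSphere.prod (.volumeIoiPow (finrank ℝ E - 1))) := by
    rw [← hpolar.integrable_comp_emb hemb, show f ∘ polar = g ∘ (↑) from funext hf,
      ← integrableOn_iff_comap_subtypeVal hm]
    exact hg.integrableOn
  calc ∫ x, g x ∂μ
    _ = ∫ x : ({0}ᶜ : Set E), g x ∂μ.comap (↑) := by
      rw [integral_subtype_comap hm, restrict_compl_singleton]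
    _ = ∫ p, f p ∂μ.toSphere.prod (.volumeIoiPow (finrank ℝ E - 1)) := by
      rw [← hpolar.integral_comp hemb, funext hf]
    _ = _ := by
      rw [integral_prod _ hint]
      exact integral_congr_ae (.of_forall fun ω ↦
        integral_volumeIoiPow _ fun t : ℝ ↦ g (t • (ω : E)))

theorem setIntegral_ball_eq_integral_toSphere [Nontrivial E] (hr : 0 ≤ r) {g : E → G}
    (hg : IntegrableOn g (ball 0 r) μ) :
    ∫ x in ball 0 r, g x ∂μ =
      ∫ ω : sphere (0 : E) 1,
        (∫ t in 0..r, t ^ (finrank ℝ E - 1) • g (t • (ω : E))) ∂μ.toSphere := by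
  rw [← integral_indicator measurableSet_ball,
    integral_eq_integral_toSphere_integral_Ioi (hg.integrable_indicator measurableSet_ball)]
  congr! 2 with ω
  rw [intervalIntegral.integral_of_le hr, integral_Ioc_eq_integral_Ioo, ← Ioi_inter_Iio,
    ← setIntegral_indicator measurableSet_Iio]
  refine setIntegral_congr_fun measurableSet_Ioi fun t ht ↦ ?_
  simp [indicator, norm_smul, abs_of_pos (mem_Ioi.1 ht)]

-- The integrand is the divergence of the field `x ↦ F x ⊗ x`.
theorem setIntegral_ball_finrank_smul_add_fderiv [CompleteSpace G] [Nontrivial E] (hr : 0 ≤ r)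
    {F : E → G} (hF : ContDiff ℝ 1 F) :
    ∫ x in ball 0 r, ((finrank ℝ E : ℝ) • F x + fderiv ℝ F x x) ∂μ =
      r ^ finrank ℝ E • ∫ ω : sphere (0 : E) 1, F (r • (ω : E)) ∂μ.toSphere := by
  have hcont : Continuous fun x ↦ (finrank ℝ E : ℝ) • F x + fderiv ℝ F x x := by
    have := hF.continuous
    have := hF.continuous_fderiv one_ne_zero
    fun_prop
  have hradial (ω : E) : ∫ t in 0..r, t ^ (finrank ℝ E - 1) •
      ((finrank ℝ E : ℝ) • F (t • ω) + fderiv ℝ F (t • ω) (t • ω)) =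
        r ^ finrank ℝ E • F (r • ω) := by
    rw [intervalIntegral.integral_eq_sub_of_hasDerivAt
      (fun t _ ↦ hasDerivAt_pow_smul_comp_smul (hF.differentiable one_ne_zero _) finrank_pos.ne')
      (Continuous.intervalIntegrable (by fun_prop) _ _),
      zero_pow finrank_pos.ne', zero_smul, sub_zero]
  rw [setIntegral_ball_eq_integral_toSphere hr (integrableOn_ball_of_continuous hcont 0 r),
    ← integral_smul]
  simp_rw [hradial]

end PolarCoordinates

section RadialWeight

variable {E : Type*} [NormedAddCommGroup E] {r : ℝ} {x : E}

/-- The function `(r² - ‖x‖²) / 2` on the ball of radius `r`, extended by zero. It is the Lipschitz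
test function with gradient `-x` in the ball. -/
def radialWeight (r : ℝ) (x : E) : ℝ := (r ^ 2 - min ‖x‖ r ^ 2) / 2

theorem radialWeight_of_norm_le (hx : ‖x‖ ≤ r) : radialWeight r x = (r ^ 2 - ‖x‖ ^ 2) / 2 := by
  rw [radialWeight, min_eq_left hx]

theorem radialWeight_of_le_norm (hx : r ≤ ‖x‖) : radialWeight r x = 0 := by
  rw [radialWeight, min_eq_right hx, sub_self, zero_div]

theorem radialWeight_nonneg (r : ℝ) (x : E) : 0 ≤ radialWeight r x := by
  rcases le_total ‖x‖ r with hx | hx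
  · rw [radialWeight_of_norm_le hx]
    have := pow_le_pow_left₀ (norm_nonneg x) hx 2
    linarith
  · rw [radialWeight_of_le_norm hx]

theorem lipschitzWith_radialWeight (hr : 0 ≤ r) :
    LipschitzWith r.toNNReal (radialWeight r : E → ℝ) := by
  refine .of_dist_le_mul fun x y ↦ ?_
  have hmin : LipschitzWith 1 fun x : E ↦ min ‖x‖ r := lipschitzWith_one_norm.min_const r
  have hfactor : radialWeight r x - radialWeight r y =
      -((min ‖x‖ r + min ‖y‖ r) / 2 * (min ‖x‖ r - min ‖y‖ r)) := by
    unfold radialWeight; ring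
  have hbound : |(min ‖x‖ r + min ‖y‖ r) / 2| ≤ r := by
    rw [abs_of_nonneg (by positivity)]
    linarith [min_le_right ‖x‖ r, min_le_right ‖y‖ r]
  rw [Real.dist_eq, hfactor, abs_neg, abs_mul, Real.coe_toNNReal r hr]
  gcongr
  simpa [Real.dist_eq] using hmin.dist_le_mul x y

variable [InnerProductSpace ℝ E]

theorem lineDeriv_radialWeight_of_norm_lt (hx : ‖x‖ < r) (a : E) :
    lineDeriv ℝ (radialWeight r) x a = -⟪x, a⟫ := by
  have hloc : radialWeight r =ᶠ[𝓝 x] fun y : E ↦ (r ^ 2 - ‖y‖ ^ 2) / 2 := by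
    filter_upwards [isOpen_ball.mem_nhds (mem_ball_zero_iff.2 hx)] with y hy
    exact radialWeight_of_norm_le (mem_ball_zero_iff.1 hy).le
  have hderiv : HasFDerivAt (fun y : E ↦ (r ^ 2 - ‖y‖ ^ 2) / 2) (-innerSL ℝ x) x := by
    have hsq := (hasStrictFDerivAt_norm_sq x).hasFDerivAt.const_sub (r ^ 2)
    simpa only [div_eq_mul_inv] using (hsq.mul_const (2⁻¹ : ℝ)).congr_fderiv (by ext; simp)
  exact ((hderiv.congr_of_eventuallyEq hloc).hasLineDerivAt a).lineDeriv.trans (by simp)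

theorem lineDeriv_radialWeight_of_lt_norm (hx : r < ‖x‖) (a : E) :
    lineDeriv ℝ (radialWeight r) x a = 0 := by
  have hloc : radialWeight r =ᶠ[𝓝 x] fun _ : E ↦ (0 : ℝ) := by
    filter_upwards [continuous_norm.continuousAt.eventually (lt_mem_nhds hx)] with y hy
    exact radialWeight_of_le_norm hy.le
  exact (((hasFDerivAt_const (0 : ℝ) x).congr_of_eventuallyEq hloc).hasLineDerivAt a).lineDeriv

end RadialWeight

section Green

theorem differentiableAt_fderiv {E G : Type*} [NormedAddCommGroup E] [NormedSpace ℝ E]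
    [NormedAddCommGroup G] [NormedSpace ℝ G] {f : E → G} {x : E} (hf : ContDiffAt ℝ 2 f x) :
    DifferentiableAt ℝ (fderiv ℝ f) x :=
  (hf.fderiv_right (m := 1) le_rfl).differentiableAt one_ne_zero

theorem laplacian_eq_sum_fderiv_fderiv {ι E G : Type*} [Fintype ι] [NormedAddCommGroup E]
    [InnerProductSpace ℝ E] [FiniteDimensional ℝ E] [NormedAddCommGroup G] [NormedSpace ℝ G]
    {f : E → G} {x : E} (hf : DifferentiableAt ℝ (fderiv ℝ f) x)
    (b : OrthonormalBasis ι ℝ E) :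
    Δ f x = ∑ i, fderiv ℝ (fun y ↦ fderiv ℝ f y (b i)) x (b i) := by
  rw [laplacian_eq_iteratedFDeriv_orthonormalBasis f b]
  refine Finset.sum_congr rfl fun i _ ↦ ?_
  rw [iteratedFDeriv_two_apply, fderiv_clm_apply hf (by fun_prop)]
  simp

variable {E : Type*} [NormedAddCommGroup E] [InnerProductSpace ℝ E] [FiniteDimensional ℝ E]
  [MeasurableSpace E] [BorelSpace E] {r : ℝ}

theorem setIntegral_ball_inner_mul (hr : 0 < r) {f : E → ℝ} (hf : ContDiff ℝ 1 f)
    (hfc : HasCompactSupport f) (a : E) :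
    ∫ x in ball 0 r, ⟪x, a⟫ * f x = ∫ x, fderiv ℝ f x a * radialWeight r x := by
  obtain ⟨C, hC⟩ := hf.lipschitzWith_of_hasCompactSupport hfc one_ne_zero
  have hgrad : (fun x ↦ lineDeriv ℝ (radialWeight r) x a * f x) =ᵐ[volume]
      (ball 0 r).indicator fun x ↦ -(⟪x, a⟫ * f x) := by
    filter_upwards [measure_eq_zero_iff_ae_notMem.1
      (Measure.addHaar_sphere_of_ne_zero volume (0 : E) hr.ne')] with x hx
    rcases lt_or_gt_of_ne (mem_sphere_zero_iff_norm.not.1 hx) with hlt | hgt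
    · rw [indicator_of_mem (mem_ball_zero_iff.2 hlt), lineDeriv_radialWeight_of_norm_lt hlt,
        neg_mul]
    · rw [indicator_of_notMem (by simpa using hgt.le), lineDeriv_radialWeight_of_lt_norm hgt,
        zero_mul]
  calc ∫ x in ball 0 r, ⟪x, a⟫ * f x
    _ = -∫ x, lineDeriv ℝ (radialWeight r) x a * f x := by
      rw [integral_congr_ae hgrad, integral_indicator measurableSet_ball, integral_neg, neg_neg]
    _ = -∫ x, lineDeriv ℝ f x (-a) * radialWeight r x := by
      rw [(lipschitzWith_radialWeight hr.le).integral_lineDeriv_mul_eq hC hfc]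
    _ = _ := by
      rw [← integral_neg]
      simp [(hf.differentiable one_ne_zero _).lineDeriv_eq_fderiv]

theorem setIntegral_ball_fderiv_apply_self (hr : 0 < r) {f : E → ℝ} (hf : ContDiff ℝ 2 f)
    (hfc : HasCompactSupport f) :
    ∫ x in ball 0 r, fderiv ℝ f x x = ∫ x, Δ f x * radialWeight r x := by
  set b := stdOrthonormalBasis ℝ E
  have hf' : ContDiff ℝ 1 (fderiv ℝ f) := hf.fderiv_right le_rfl
  have hpartial (i) : ContDiff ℝ 1 fun x ↦ fderiv ℝ f x (b i) := hf'.clm_apply contDiff_const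
  have hpartialc (i) : HasCompactSupport fun x ↦ fderiv ℝ f x (b i) := hfc.fderiv_apply ℝ (b i)
  have hcoord (x : E) : fderiv ℝ f x x = ∑ i, ⟪x, b i⟫ * fderiv ℝ f x (b i) := by
    simpa [real_inner_comm] using congrArg (fderiv ℝ f x) (b.sum_repr' x).symm
  have hw : Continuous (radialWeight r : E → ℝ) :=
    (lipschitzWith_radialWeight hr.le).continuous
  simp_rw [hcoord, laplacian_eq_sum_fderiv_fderiv (hf'.differentiable one_ne_zero _) b,
    Finset.sum_mul]
  rw [integral_finsetSum, integral_finsetSum]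
  · exact Finset.sum_congr rfl fun i _ ↦ setIntegral_ball_inner_mul hr (hpartial i) (hpartialc i) _
  · intro i _
    have := (hpartial i).continuous_fderiv one_ne_zero
    exact Continuous.integrable_of_hasCompactSupport (by fun_prop)
      ((hpartialc i).fderiv_apply ℝ (b i)).mul_right
  · intro i _
    have := (hpartial i).continuous
    exact integrableOn_ball_of_continuous (by fun_prop) 0 r

end Green

section Cutoff

open scoped Manifold

theorem exists_contDiff_hasCompactSupport_eventuallyEq {E G : Type*} [NormedAddCommGroup E]
    [NormedSpace ℝ E] [FiniteDimensional ℝ E] [NormedAddCommGroup G] [NormedSpace ℝ G] {n : ℕ}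
    {f : E → G} {K : Set E} (hK : IsCompact K) (hf : ∀ x ∈ K, ContDiffAt ℝ n f x) :
    ∃ g : E → G, ContDiff ℝ n g ∧ HasCompactSupport g ∧ ∀ x ∈ K, g =ᶠ[𝓝 x] f := by
  have hopen : IsOpen {x | ContDiffAt ℝ n f x} :=
    isOpen_iff_eventually.2 fun x hx ↦ (show ContDiffAt ℝ n f x from hx).eventually (by simp)
  obtain ⟨L, hL, hKL, hLf⟩ := exists_compact_between hK hopen hf
  obtain ⟨χ, hχ1, hχ0, -⟩ :=
    exists_contMDiffMap_one_nhds_of_subset_interior (n := n) 𝓘(ℝ, E) hK.isClosed hKL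
  have hχL : tsupport χ ⊆ L :=
    closure_minimal (fun x hx ↦ by_contra fun hxL ↦ hx (hχ0 x hxL)) hL.isClosed
  refine ⟨fun x ↦ χ x • f x, contDiff_iff_contDiffAt.2 fun x ↦ ?_, ?_, fun x hx ↦ ?_⟩
  · by_cases hx : x ∈ tsupport χ
    · exact χ.contMDiff.contDiff.contDiffAt.smul (hLf (hχL hx))
    · refine contDiffAt_const (c := (0 : G)) |>.congr_of_eventuallyEq ?_
      filter_upwards [notMem_tsupport_iff_eventuallyEq.1 hx] with y hy
      simp [hy]
  · exact HasCompactSupport.smul_right (hL.of_isClosed_subset (isClosed_tsupport χ) hχL)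
  · filter_upwards [hχ1.filter_mono (nhds_le_nhdsSet hx)] with y hy
    rw [hy, one_smul]

end Cutoff

section Subharmonic

variable {E : Type*} [NormedAddCommGroup E] [InnerProductSpace ℝ E] [FiniteDimensional ℝ E]
  [MeasurableSpace E] [BorelSpace E] {r : ℝ} {f : E → ℝ} {n : ℕ}

theorem setIntegral_ball_fderiv_apply_self_nonneg (hr : 0 < r) (hf : ContDiff ℝ 2 f)
    (hfc : HasCompactSupport f) (hΔ : ∀ x ∈ ball 0 r, 0 ≤ Δ f x) :
    0 ≤ ∫ x in ball 0 r, fderiv ℝ f x x := by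
  rw [setIntegral_ball_fderiv_apply_self hr hf hfc]
  refine integral_nonneg fun x ↦ ?_
  rcases lt_or_ge ‖x‖ r with hx | hx
  · exact mul_nonneg (hΔ x (mem_ball_zero_iff.2 hx)) (radialWeight_nonneg r x)
  · simp [radialWeight_of_le_norm hx]

theorem setIntegral_ball_add_setIntegral_fderiv (hn : finrank ℝ E = n + 1) (hr : 0 < r)
    (hf : ContDiff ℝ 1 f) :
    (n + 1) * (∫ x in ball 0 r, f x) + ∫ x in ball 0 r, fderiv ℝ f x x =
      r * ∫ x in sphere 0 r, f x ∂μHE[n] := by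
  have : Nontrivial E := nontrivial_of_finrank_pos (R := ℝ) (by lia)
  have := hf.continuous_fderiv one_ne_zero
  have hdiv := setIntegral_ball_finrank_smul_add_fderiv (μ := volume) hr.le hf
  have hsphere := setIntegral_sphere_eq_toSphere hr f
  rw [integral_add (integrableOn_ball_of_continuous (by fun_prop) 0 r)
    (integrableOn_ball_of_continuous (by fun_prop) 0 r), integral_smul, hn] at hdiv
  rw [hn, Nat.add_sub_cancel] at hsphere
  rw [hsphere, smul_eq_mul, ← mul_assoc, ← pow_succ', ← smul_eq_mul (r ^ (n + 1)), ← hdiv]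
  simp

theorem setIntegral_ball_le_of_laplacian_nonneg (hn : finrank ℝ E = n + 1) (hr : 0 < r)
    (hf : ∀ x ∈ closedBall 0 r, ContDiffAt ℝ 2 f x) (hΔ : ∀ x ∈ ball 0 r, 0 ≤ Δ f x) :
    ∫ x in ball 0 r, f x ≤ r / (n + 1) * ∫ x in sphere 0 r, f x ∂μHE[n] := by
  obtain ⟨g, hg, hgc, hgf⟩ :=
    exists_contDiff_hasCompactSupport_eventuallyEq (isCompact_closedBall (0 : E) r) hf
  have hball : ∫ x in ball 0 r, f x = ∫ x in ball 0 r, g x :=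
    setIntegral_congr_fun measurableSet_ball fun x hx ↦
      (hgf x (ball_subset_closedBall hx)).self_of_nhds.symm
  have hsphere : ∫ x in sphere 0 r, f x ∂μHE[n] = ∫ x in sphere 0 r, g x ∂μHE[n] :=
    setIntegral_congr_fun isClosed_sphere.measurableSet fun x hx ↦
      (hgf x (sphere_subset_closedBall hx)).self_of_nhds.symm
  have hΔg (x) (hx : x ∈ ball 0 r) : 0 ≤ Δ g x := by
    rw [(laplacian_congr_nhds (hgf x (ball_subset_closedBall hx))).self_of_nhds]
    exact hΔ x hx
  have hdiv := setIntegral_ball_add_setIntegral_fderiv hn hr (hg.of_le one_le_two)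
  have hnonneg := setIntegral_ball_fderiv_apply_self_nonneg hr hg hgc hΔg
  rw [hball, hsphere, div_mul_eq_mul_div, le_div_iff₀ (by positivity)]
  linarith

end Subharmonic

section Harmonic

variable {E F : Type*} [NormedAddCommGroup E] [InnerProductSpace ℝ E] [FiniteDimensional ℝ E]
  [NormedAddCommGroup F] [InnerProductSpace ℝ F]

theorem laplacian_norm_sq {ι : Type*} [Fintype ι] {v : E → F} {x : E} (hv : ContDiffAt ℝ 2 v x)
    (b : OrthonormalBasis ι ℝ E) :
    Δ (fun y ↦ ‖v y‖ ^ 2) x = 2 * ∑ i, ‖fderiv ℝ v x (b i)‖ ^ 2 + 2 * ⟪v x, Δ v x⟫ := by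
  have hv' : DifferentiableAt ℝ (fderiv ℝ v) x := differentiableAt_fderiv hv
  have hpartial (i) : (fun y ↦ fderiv ℝ (fun z ↦ ‖v z‖ ^ 2) y (b i)) =ᶠ[𝓝 x]
      fun y ↦ 2 * ⟪v y, fderiv ℝ v y (b i)⟫ := by
    filter_upwards [hv.eventually (by simp)] with y hy
    rw [((hy.differentiableAt two_ne_zero).hasFDerivAt.norm_sq).fderiv]
    simp
  have hterm (i) : fderiv ℝ (fun y ↦ 2 * ⟪v y, fderiv ℝ v y (b i)⟫) x (b i) =
      2 * ‖fderiv ℝ v x (b i)‖ ^ 2 +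
        2 * ⟪v x, fderiv ℝ (fun y ↦ fderiv ℝ v y (b i)) x (b i)⟫ := by
    have hvx := hv.differentiableAt two_ne_zero
    have hvi : DifferentiableAt ℝ (fun y ↦ fderiv ℝ v y (b i)) x := by fun_prop
    rw [fderiv_const_mul (hvx.inner ℝ hvi), smul_apply, fderiv_inner_apply ℝ hvx hvi,
      real_inner_self_eq_norm_sq, smul_eq_mul]
    ring
  rw [laplacian_eq_sum_fderiv_fderiv (differentiableAt_fderiv (hv.norm_sq ℝ)) b,
    laplacian_eq_sum_fderiv_fderiv hv' b]
  simp_rw [(hpartial _).fderiv_eq, hterm, Finset.sum_add_distrib, ← Finset.mul_sum, inner_sum]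

theorem laplacian_norm_sq_nonneg {v : E → F} {x : E} (hv : HarmonicAt v x) :
    0 ≤ Δ (fun y ↦ ‖v y‖ ^ 2) x := by
  have hΔ : Δ v x = 0 := hv.2.self_of_nhds
  rw [laplacian_norm_sq hv.1 (stdOrthonormalBasis ℝ E), hΔ, inner_zero_right]
  positivity

end Harmonic

section HarmonicField

theorem apply_fderiv_apply_eq_zero {E V W : Type*} [NormedAddCommGroup E] [NormedSpace ℝ E]
    [NormedAddCommGroup V] [NormedSpace ℝ V] [NormedAddCommGroup W] [NormedSpace ℝ W]
    {f : E → V} {x : E} (hf : DifferentiableAt ℝ f x) (L : V →L[ℝ] W)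
    (hL : ∀ᶠ y in 𝓝 x, L (f y) = 0) (a : E) : L (fderiv ℝ f x a) = 0 := by
  have hzero : (fun y ↦ L (f y)) =ᶠ[𝓝 x] fun _ ↦ 0 := hL
  have hfderiv : L.comp (fderiv ℝ f x) = 0 :=
    (L.hasFDerivAt.comp x hf.hasFDerivAt).unique (hzero.hasFDerivAt_iff.2 (hasFDerivAt_const 0 x))
  exact DFunLike.congr_fun hfderiv a

variable {E : Type*} [NormedAddCommGroup E] [InnerProductSpace ℝ E] {v : E → E} {x : E}

theorem isSymmetric_fderiv_fderiv_apply (hv : ContDiffAt ℝ 2 v x)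
    (hsymm : ∀ᶠ y in 𝓝 x, (fderiv ℝ v y).toLinearMap.IsSymmetric) (a : E) :
    (fderiv ℝ (fderiv ℝ v) x a).toLinearMap.IsSymmetric := fun u w ↦ by
  set L : (E →L[ℝ] E) →L[ℝ] ℝ :=
    (innerSL ℝ w).comp (.apply ℝ E u) - (innerSL ℝ u).comp (.apply ℝ E w)
  have hL : ∀ᶠ y in 𝓝 x, L (fderiv ℝ v y) = 0 := by
    filter_upwards [hsymm] with y hy
    simpa [L, sub_eq_zero, real_inner_comm] using hy u w
  simpa [L, sub_eq_zero, real_inner_comm] using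
    apply_fderiv_apply_eq_zero (differentiableAt_fderiv hv) L hL a

variable [FiniteDimensional ℝ E]

theorem trace_fderiv_fderiv_apply_eq_zero (hv : ContDiffAt ℝ 2 v x)
    (htrace : ∀ᶠ y in 𝓝 x, LinearMap.trace ℝ E (fderiv ℝ v y).toLinearMap = 0) (a : E) :
    LinearMap.trace ℝ E (fderiv ℝ (fderiv ℝ v) x a).toLinearMap = 0 :=
  apply_fderiv_apply_eq_zero (differentiableAt_fderiv hv)
    (LinearMap.trace ℝ E ∘ₗ ContinuousLinearMap.coeLM ℝ).toContinuousLinearMap htrace a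

theorem laplacian_eq_zero_of_isSymmetric_of_trace_eq_zero (hv : ContDiffAt ℝ 2 v x)
    (hsymm : ∀ᶠ y in 𝓝 x, (fderiv ℝ v y).toLinearMap.IsSymmetric)
    (htrace : ∀ᶠ y in 𝓝 x, LinearMap.trace ℝ E (fderiv ℝ v y).toLinearMap = 0) :
    Δ v x = 0 := by
  set b := stdOrthonormalBasis ℝ E
  set D := fderiv ℝ (fderiv ℝ v) x
  refine ext_inner_right ℝ fun u ↦ ?_
  calc ⟪Δ v x, u⟫
    _ = ∑ i, ⟪D (b i) (b i), u⟫ := by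
      simp [laplacian_eq_iteratedFDeriv_orthonormalBasis v b, iteratedFDeriv_two_apply, sum_inner,
        D]
    _ = ∑ i, ⟪b i, D (b i) u⟫ := Finset.sum_congr rfl fun i _ ↦
      isSymmetric_fderiv_fderiv_apply hv hsymm (b i) (b i) u
    _ = ∑ i, ⟪b i, D u (b i)⟫ := by
      simp_rw [D, (hv.isSymmSndFDerivAt (by simp)).eq _ u]
    _ = LinearMap.trace ℝ E (D u).toLinearMap := (LinearMap.trace_eq_sum_inner _ b).symm
    _ = ⟪0, u⟫ := by
      rw [trace_fderiv_fderiv_apply_eq_zero hv htrace, inner_zero_left]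

theorem IsHarmonicField.harmonicOnNhd {Ω : Set E3} {v : E3 → E3} (hΩ : IsOpen Ω)
    (hv : IsHarmonicField Ω v) : HarmonicOnNhd v Ω := by
  have hsmooth {x} (hx : x ∈ Ω) : ContDiffAt ℝ 2 v x :=
    (hv.1.contDiffAt (hΩ.mem_nhds hx)).of_le (WithTop.coe_le_coe.2 (le_top : (2 : ℕ∞) ≤ ⊤))
  have hlaplacian {x} (hx : x ∈ Ω) : Δ v x = 0 := by
    refine laplacian_eq_zero_of_isSymmetric_of_trace_eq_zero (hsmooth hx) ?_ ?_
    · filter_upwards [hΩ.mem_nhds hx] with y hy u w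
      exact ((hv.2 y hy).1 u w).trans (real_inner_comm _ _)
    · filter_upwards [hΩ.mem_nhds hx] with y hy using (hv.2 y hy).2
  intro x hx
  refine ⟨hsmooth hx, ?_⟩
  filter_upwards [hΩ.mem_nhds hx] with y hy using hlaplacian hy

end HarmonicField

theorem ball_le_sphere_integral_general {E F : Type*} [NormedAddCommGroup E]
    [InnerProductSpace ℝ E] [FiniteDimensional ℝ E] [MeasurableSpace E] [BorelSpace E]
    [NormedAddCommGroup F] [InnerProductSpace ℝ F] {n : ℕ} (hn : finrank ℝ E = n + 1) {r : ℝ}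
    (hr : 0 < r) {v : E → F} (hv : HarmonicOnNhd v (closedBall 0 r)) :
    ∫ x in ball 0 r, ‖v x‖ ^ 2 ≤ r / (n + 1) * ∫ x in sphere 0 r, ‖v x‖ ^ 2 ∂μHE[n] :=
  setIntegral_ball_le_of_laplacian_nonneg hn hr (fun x hx ↦ (hv x hx).1.norm_sq ℝ) fun x hx ↦
    laplacian_norm_sq_nonneg (hv x (ball_subset_closedBall hx))

/-- The Euclidean model of the paper's Lemma 7.3. -/
theorem ball_le_sphere_integral (r : ℝ) (hr : 0 < r) (v : E3 → E3) (U : Set E3)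
    (hU : IsOpen U) (hBU : Metric.closedBall (0 : E3) r ⊆ U)
    (hv : IsHarmonicField U v) :
    (∫ x in Metric.ball (0 : E3) r, ‖v x‖ ^ 2) ≤
      r * ∫ x in Metric.sphere (0 : E3) r, ‖v x‖ ^ 2 ∂μH[2] := by
  have hsharp := ball_le_sphere_integral_general (n := 2) (by simp) hr
    ((hv.harmonicOnNhd hU).mono hBU)
  exact hsharp.trans <| mul_le_mul (div_le_self hr.le (by norm_num))
    (mod_cast setIntegral_euclideanHausdorffMeasure_le (fun _ ↦ by positivity) _)
    (by positivity) hr.le
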